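/- arXiv:1910.03742 — 4 statements merged into one kernel-verified Lean document; each statement's English description precedes it below -/
import Mathlib

section
/- Let d > 3 and let k be a positive integer with k ≤ 2^(d/2 − 2). Then the VC-dimension of bin(lin_k(𝒯)), the class of thresholded linear combinations of k linear threshold functions on ℝ^d, is at least (dk/8)·log₂(k/4). -/
/-- The class `𝒯` of linear threshold functions on `ℝ^d`, as `{0,1}`-valued
real functions `x ↦ 𝟙[θᵀx ≥ t]`. -/
def LTF (d : ℕ) : Set ((Fin d → ℝ) → ℝ) :=
  {f | ∃ (θ : Fin d → ℝ) (t : ℝ), f = fun x => if (∑ j, θ j * x j) ≥ t then (1 : ℝ) else 0}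

/-- `lin_k(𝒢)`: linear combinations of `k` functions from `G`. -/
def linComb {α : Type*} (G : Set (α → ℝ)) (k : ℕ) : Set (α → ℝ) :=
  {f | ∃ (w : Fin k → ℝ) (g : Fin k → α → ℝ), (∀ i, g i ∈ G) ∧
    f = fun x => ∑ i, w i * g i x}

/-- `bin(ℱ)`: thresholded binary versions `x ↦ 𝟙[f(x) ≥ t]` of functions in `F`. -/
def binOf {α : Type*} (F : Set (α → ℝ)) : Set (α → ℝ) :=
  {h | ∃ f ∈ F, ∃ t : ℝ, h = fun x => if f x ≥ t then (1 : ℝ) else 0}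

/-- A class of `{0,1}`-valued functions shatters some `m` points. -/
def Shatters {α : Type*} (F : Set (α → ℝ)) (m : ℕ) : Prop :=
  ∃ x : Fin m → α, ∀ b : Fin m → Bool, ∃ f ∈ F,
    ∀ i, f (x i) = if b i then (1 : ℝ) else 0

/-- The numbers below `M` can be rearranged so that the binary expansion of `s` agrees with a
prescribed pattern, attached to `τ s`, at every position where `τ s` has a binary digit `1`. -/
theorem exists_injOn_testBit_eq (M : ℕ) (T : ℕ → ℕ → Bool) :
    ∃ τ : ℕ → ℕ, (∀ s < M, τ s < M) ∧ (∀ s < M, ∀ s' < M, τ s = τ s' → s = s') ∧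
      ∀ s < M, ∀ l, (τ s).testBit l = true → s.testBit l = T (τ s) l := by
  induction M using Nat.strong_induction_on generalizing T with
  | _ M ih =>
  rcases Nat.lt_or_ge M 2 with hM | hM
  · refine ⟨fun _ => 0, fun s hs => Nat.zero_lt_of_lt hs, fun s hs s' hs' _ => by omega, ?_⟩
    intro s _ l h
    simp at h
  -- the element of `{2 * i, 2 * i + 1}` that is matched to a number with lowest digit `b`
  let block : Bool → ℕ → ℕ := fun b i =>
    if 2 * i + 1 < M ∧ T (2 * i + 1) 0 = b then 2 * i + 1 else 2 * i
  let size : Bool → ℕ := fun b => if b then M / 2 else (M + 1) / 2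
  have size_lt : ∀ b, size b < M := by
    intro b; cases b <;> simp [size] <;> omega
  have block_div : ∀ b i, block b i / 2 = i := by
    intro b i; simp only [block]; split_ifs <;> omega
  have block_lt : ∀ b i, i < size b → block b i < M := by
    intro b i hi
    simp only [block]
    split_ifs with h
    · exact h.1
    · cases b <;> simp [size] at hi <;> omega
  have block_ne : ∀ b i, i < size true → block b i ≠ block (!b) i := by
    intro b i hi
    have hi' : 2 * i + 1 < M := by simp [size] at hi; omega
    cases b <;> cases h : T (2 * i + 1) 0 <;> simp [block, hi', h]
  have half_lt : ∀ s < M, s / 2 < size (s.testBit 0) := by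
    intro s hs
    rw [Nat.testBit_zero]
    by_cases h : s % 2 = 1 <;> simp [size, h] <;> omega
  choose τ hτ_lt hτ_inj hτ_bit using
    fun b => ih (size b) (size_lt b) (fun i l => T (block b i) (l + 1))
  refine ⟨fun s => block (s.testBit 0) (τ (s.testBit 0) (s / 2)),
    fun s hs => block_lt _ _ (hτ_lt _ _ (half_lt s hs)), ?_, ?_⟩
  · intro s hs s' hs' h
    have h1 := half_lt s hs
    have h2 := half_lt s' hs'
    have hdiv := congrArg (· / 2) h
    simp only [block_div] at h hdiv
    rw [← hdiv] at h
    have hi := hτ_lt _ _ h1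
    have hi' := hτ_lt _ _ h2
    rw [← hdiv] at hi'
    have hb : s.testBit 0 = s'.testBit 0 := by
      cases hb : s.testBit 0 <;> cases hb' : s'.testBit 0 <;> simp only [hb, hb'] at h hi hi'
      · rfl
      · exact absurd h (block_ne false _ hi')
      · exact absurd h (block_ne true _ hi)
      · rfl
    have hhalf := hτ_inj _ _ h1 (s' / 2) (hb ▸ h2) (by rw [hdiv, hb])
    simp only [Nat.testBit_zero, decide_eq_decide] at hb
    omega
  · intro s hs l hl
    cases l with
    | zero =>
      simp only [block] at hl ⊢
      split_ifs at hl ⊢ with h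
      · exact h.2.symm
      · simp [Nat.testBit_zero] at hl
    | succ l =>
      simp only [Nat.testBit_succ, block_div] at hl
      rw [Nat.testBit_succ]
      exact hτ_bit _ _ (half_lt s hs) l hl

/-- The total number of binary digits `1` in the numbers below `M`. -/
def digitTotal (M : ℕ) : ℕ := ∑ i ∈ Finset.range M, i.bitIndices.length

theorem digitTotal_two_mul (m : ℕ) : digitTotal (2 * m) = 2 * digitTotal m + m := by
  induction m with
  | zero => simp [digitTotal]
  | succ m ih =>
    simp only [digitTotal] at ih ⊢
    rw [show 2 * (m + 1) = 2 * m + 1 + 1 by ring, Finset.sum_range_succ, Finset.sum_range_succ, ih,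
      Finset.sum_range_succ]
    simp
    ring

theorem digitTotal_two_mul_add_one (m : ℕ) :
    digitTotal (2 * m + 1) = digitTotal m + digitTotal (m + 1) + m := by
  have h := digitTotal_two_mul m
  simp only [digitTotal] at h ⊢
  rw [Finset.sum_range_succ, h, Finset.sum_range_succ]
  simp
  ring

theorem mul_log_midpoint_le {x : ℝ} (hx : 0 < x) :
    (2 * x + 1) * Real.log (x + 1 / 2) ≤ x * Real.log x + (x + 1) * Real.log (x + 1) := by
  have h := Real.convexOn_mul_log.2 (Set.mem_Ici.2 hx.le)
    (Set.mem_Ici.2 (by linarith : (0 : ℝ) ≤ x + 1))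
    (by norm_num : (0 : ℝ) ≤ 1 / 2) (by norm_num : (0 : ℝ) ≤ 1 / 2) (by norm_num)
  simp only [smul_eq_mul] at h
  rw [show 1 / 2 * x + 1 / 2 * (x + 1) = x + 1 / 2 by ring] at h
  linarith

theorem le_digitTotal_mul_log (M : ℕ) (hM : 2 ≤ M) :
    (M : ℝ) / 2 * Real.log (2 * M / 3) + Real.log 2 / 2 ≤ digitTotal M * Real.log 2 := by
  induction M using Nat.strong_induction_on with
  | _ M ih =>
  have split : ∀ x : ℝ, 0 < x → Real.log (2 * x / 3) = Real.log x + Real.log 2 - Real.log 3 := by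
    intro x hx
    rw [Real.log_div (by positivity) (by norm_num), Real.log_mul (by norm_num) hx.ne']
    ring
  obtain rfl | rfl | hM4 : M = 2 ∨ M = 3 ∨ 4 ≤ M := by omega
  · have h : digitTotal 2 = 1 := by simp [digitTotal, Finset.sum_range_succ]
    have h3 : 3 / 2 * Real.log 2 ≤ Real.log 3 := by
      have : Real.log ((2 : ℝ) ^ 3) ≤ Real.log ((3 : ℝ) ^ 2) :=
        Real.log_le_log (by norm_num) (by norm_num)
      rw [Real.log_pow, Real.log_pow] at this
      push_cast at this
      linarith
    rw [h]
    push_cast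
    rw [split 2 (by norm_num)]
    linarith
  · have h : digitTotal 3 = 2 := by
      have h2 : Nat.bitIndices 2 = [1] := Nat.bitIndices_two_pow 1
      simp [digitTotal, Finset.sum_range_succ, h2]
    rw [h]
    push_cast
    rw [split 3 (by norm_num)]
    linarith
  · obtain ⟨m, rfl | rfl⟩ := Nat.even_or_odd' M
    · have h := ih m (by omega) (by omega)
      have hm : (0 : ℝ) < m := by exact_mod_cast (by omega : 0 < m)
      rw [digitTotal_two_mul]
      push_cast
      rw [split _ (by positivity)] at h ⊢
      rw [Real.log_mul (by norm_num) hm.ne']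
      have := Real.log_pos (by norm_num : (1 : ℝ) < 2)
      linarith
    · have h := ih m (by omega) (by omega)
      have h' := ih (m + 1) (by omega) (by omega)
      have hm : (0 : ℝ) < m := by exact_mod_cast (by omega : 0 < m)
      have hconv := mul_log_midpoint_le hm
      rw [digitTotal_two_mul_add_one]
      push_cast at h' ⊢
      rw [split _ (by positivity)] at h h' ⊢
      rw [show 2 * (m : ℝ) + 1 = 2 * (m + 1 / 2) by ring,
        Real.log_mul (by norm_num) (by positivity)]
      linarith

theorem mul_logb_le_digitTotal (k : ℕ) (hk : 1 ≤ k) :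
    (k : ℝ) / 4 * Real.logb 2 ((k : ℝ) / 4) ≤ digitTotal (k / 2) := by
  have hk0 : (0 : ℝ) < k := by exact_mod_cast hk
  have hlog2 := Real.log_pos (by norm_num : (1 : ℝ) < 2)
  rcases Nat.lt_or_ge k 4 with hk4 | hk4
  · have : Real.logb 2 ((k : ℝ) / 4) ≤ 0 := by
      apply Real.logb_nonpos (by norm_num) (by positivity)
      have : (k : ℝ) ≤ 4 := by exact_mod_cast hk4.le
      linarith
    exact (mul_nonpos_of_nonneg_of_nonpos (by positivity) this).trans (Nat.cast_nonneg _)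
  rw [Real.logb, ← mul_div_assoc, div_le_iff₀ hlog2]
  obtain ⟨M, hM⟩ : ∃ M, k / 2 = M := ⟨_, rfl⟩
  have hM2 : 2 ≤ M := by omega
  have hM2' : (2 : ℝ) ≤ M := by exact_mod_cast hM2
  rw [hM]
  refine le_trans ?_ (le_digitTotal_mul_log M hM2)
  have hkM : (k : ℝ) ≤ 2 * M + 1 := by exact_mod_cast (by omega : k ≤ 2 * M + 1)
  have hstep : (k : ℝ) / 4 * Real.log (k / 4) ≤
      (2 * M + 1) / 4 * Real.log ((2 * M + 1) / 4) := by
    have hk4' : (4 : ℝ) ≤ k := by exact_mod_cast hk4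
    have h0 : 0 ≤ Real.log ((k : ℝ) / 4) := Real.log_nonneg (by linarith)
    gcongr
  refine hstep.trans ?_
  have hbern : (2 * M + 1 : ℝ) ≤ 16 * (16 / 15) ^ (2 * M) := by
    have h := one_add_mul_le_pow (by norm_num : (-2 : ℝ) ≤ 1 / 15) (2 * M)
    norm_num at h ⊢
    linarith
  have hlog := Real.log_le_log (by positivity) hbern
  rw [Real.log_mul (by norm_num) (by positivity), Real.log_pow,
    show (16 : ℝ) = 2 ^ 4 by norm_num, Real.log_pow] at hlog
  have hratio : Real.log (2 ^ 4 / 15) ≤ Real.log ((2 * M / 3) / ((2 * M + 1) / 4)) := by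
    apply Real.log_le_log (by norm_num)
    rw [le_div_iff₀ (by positivity)]
    linarith
  rw [Real.log_div (x := 2 * (M : ℝ) / 3) (by positivity) (by positivity)] at hratio
  have hquarter : Real.log ((2 * M + 1 : ℝ) / 4) = Real.log (2 * M + 1) - 2 * Real.log 2 := by
    rw [Real.log_div (by positivity) (by norm_num), show (4 : ℝ) = 2 ^ 2 by norm_num,
      Real.log_pow]
    push_cast
    ring
  have hmul := mul_le_mul_of_nonneg_left hratio (by positivity : (0 : ℝ) ≤ 2 * M)
  push_cast at hlog
  rw [hquarter] at hmul ⊢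
  linarith

theorem sum_mem_linComb {α ι : Type*} [Fintype ι] {G : Set (α → ℝ)} {g₀ : α → ℝ} (hg₀ : g₀ ∈ G)
    {k : ℕ} (hk : Fintype.card ι ≤ k) (w : ι → ℝ) (g : ι → α → ℝ) (hg : ∀ i, g i ∈ G) :
    (fun x => ∑ i, w i * g i x) ∈ linComb G k := by
  obtain ⟨e⟩ : Nonempty (ι ↪ Fin k) :=
    Function.Embedding.nonempty_of_card_le (by simpa using hk)
  refine ⟨Function.extend e w 0, Function.extend e g (fun _ => g₀), ?_, ?_⟩
  · intro u
    by_cases h : ∃ i, e i = u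
    · obtain ⟨i, rfl⟩ := h
      rw [e.injective.extend_apply]
      exact hg i
    · rw [Function.extend_apply' _ _ _ h]
      exact hg₀
  · funext x
    refine Fintype.sum_of_injective e e.injective _ _ ?_ ?_
    · intro u hu
      rw [Function.extend_apply' _ _ _ hu]
      simp
    · intro i
      simp [e.injective.extend_apply]

theorem Shatters.of_fintype {α ι : Type*} [Fintype ι] {F : Set (α → ℝ)} (x : ι → α)
    (h : ∀ b : ι → Bool, ∃ f ∈ F, ∀ i, f (x i) = if b i then (1 : ℝ) else 0) :
    Shatters F (Fintype.card ι) := by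
  refine ⟨x ∘ (Fintype.equivFin ι).symm, fun b => ?_⟩
  obtain ⟨f, hf, hfx⟩ := h (b ∘ Fintype.equivFin ι)
  exact ⟨f, hf, fun i => by simpa using hfx ((Fintype.equivFin ι).symm i)⟩

/-- The indicator of the slab `0 ≤ v < 1 / 2`, for `v` the height of block `i` over block `t`,
raised by `1 / 2` when `c` fails. -/
theorem slab_indicator (t i : ℕ) (c : Bool) :
    ((if -(t : ℝ) + i + (if c then 0 else 1 / 2) ≥ 0 then (1 : ℝ) else 0) -
      if -(t : ℝ) + i + (if c then 0 else 1 / 2) ≥ 1 / 2 then (1 : ℝ) else 0) =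
      if t = i ∧ c then 1 else 0 := by
  rcases lt_trichotomy t i with h | rfl | h
  · have h' : (t : ℝ) + 1 ≤ i := by exact_mod_cast h
    have hv : -(t : ℝ) + i + (if c then 0 else 1 / 2) ≥ 1 / 2 := by split_ifs <;> linarith
    rw [if_pos (by linarith), if_pos hv, if_neg (by omega), sub_self]
  · cases c <;> norm_num
  · have h' : (i : ℝ) + 1 ≤ t := by exact_mod_cast h
    have hv : -(t : ℝ) + i + (if c then 0 else 1 / 2) < 0 := by split_ifs <;> linarith
    rw [if_neg (by linarith), if_neg (by linarith), if_neg (by omega), sub_self]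

/-- `2 * M` threshold units shatter `g * digitTotal M` points of `ℝ^(1 + R + g)`: the first
coordinate of a point is its block number `i < M`, the next `R` ones single out a position `l` of a
binary digit `1` of `i`, and the last `g` ones single out a group `j`. -/
theorem shatters_linComb_LTF (R g M k : ℕ) (hM : M ≤ 2 ^ R) (hk : 2 * M ≤ k) :
    Shatters (binOf (linComb (LTF (1 + R + g)) k)) (g * digitTotal M) := by
  let ι := Fin g × Σ i : Fin M, {l // l ∈ (i : ℕ).bitIndices.toFinset}
  have hcard : Fintype.card ι = g * digitTotal M := by
    simp only [ι, Fintype.card_prod, Fintype.card_fin, Fintype.card_sigma, Fintype.card_coe,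
      List.toFinset_card_of_nodup Nat.bitIndices_nodup, digitTotal]
    rw [Fin.sum_univ_eq_sum_range (fun i => i.bitIndices.length) M]
  rw [← hcard]
  have bit_lt : ∀ i : Fin M, ∀ l ∈ (i : ℕ).bitIndices.toFinset, l < R := by
    intro i l hl
    have := Nat.two_pow_le_of_mem_bitIndices (List.mem_toFinset.1 hl)
    exact (Nat.pow_lt_pow_iff_right (by norm_num : 1 < 2)).1 (this.trans_lt (i.2.trans_le hM))
  let x : ι → Fin (1 + R + g) → ℝ := fun p =>
    Fin.append (Fin.append (fun _ : Fin 1 => (p.2.1 : ℝ))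
      (Pi.single ⟨p.2.2.1, bit_lt _ _ p.2.2.2⟩ 1)) (Pi.single p.1 1)
  refine Shatters.of_fintype x fun b => ?_
  classical
  let T : Fin g → ℕ → ℕ → Bool := fun j i l =>
    if h : ∃ hi : i < M, l ∈ i.bitIndices.toFinset then b (j, ⟨⟨i, h.1⟩, ⟨l, h.2⟩⟩) else false
  choose τ hτ_lt hτ_inj hτ_bit using fun j => exists_injOn_testBit_eq M (T j)
  let θ : ℕ → Fin (1 + R + g) → ℝ := fun s =>
    Fin.append (Fin.append (fun _ : Fin 1 => (1 : ℝ))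
      (fun l => if s.testBit l then 0 else 1 / 2)) (fun j => -(τ j s : ℝ))
  have height : ∀ s (p : ι), ∑ c, θ s c * x p c =
      -(τ p.1 s : ℝ) + (p.2.1 : ℕ) + (if s.testBit p.2.2.1 then 0 else 1 / 2) := by
    intro s p
    simp only [θ, x, Fin.sum_univ_add, Fin.append_left, Fin.append_right]
    simp [Pi.single_apply]
    ring
  let t : Bool → ℝ := fun e => if e then 0 else 1 / 2
  let unit : Fin M × Bool → (Fin (1 + R + g) → ℝ) → ℝ := fun u y =>
    if (∑ c, θ u.1 c * y c) ≥ t u.2 then 1 else 0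
  have unit_mem : ∀ u, unit u ∈ LTF (1 + R + g) := fun u => ⟨θ u.1, t u.2, rfl⟩
  have θ_zero_mem : (fun y => if (∑ c, θ 0 c * y c) ≥ 0 then 1 else 0) ∈ LTF (1 + R + g) :=
    ⟨θ 0, 0, rfl⟩
  refine ⟨_, ⟨_, sum_mem_linComb θ_zero_mem (by simpa [mul_comm] using hk)
    (fun u : Fin M × Bool => if u.2 then 1 else -1) unit unit_mem, 1, rfl⟩, ?_⟩
  rintro ⟨j, i, l, hl⟩
  obtain ⟨s, hs, hsi⟩ : ∃ s < M, τ j s = i := by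
    have := Finset.surjOn_of_injOn_of_card_le (s := Finset.range M) (t := Finset.range M) (τ j)
      (fun s hs => by simpa using hτ_lt j s (by simpa using hs))
      (fun s hs s' hs' h => hτ_inj j s (by simpa using hs) s' (by simpa using hs') h) le_rfl
    obtain ⟨s, hs, h⟩ := this (by simp : (i : ℕ) ∈ (Finset.range M : Set ℕ))
    exact ⟨s, by simpa using hs, h⟩
  have hbit : s.testBit l = b (j, ⟨i, l, hl⟩) := by
    have h := hτ_bit j s hs l (by rw [hsi]; simpa using hl)
    rw [h, hsi]
    simp only [T]
    rw [dif_pos ⟨i.2, hl⟩]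
  have hsum : ∑ u : Fin M × Bool, (if u.2 then (1 : ℝ) else -1) * unit u (x (j, ⟨i, l, hl⟩)) =
      if b (j, ⟨i, l, hl⟩) then 1 else 0 := by
    rw [Fintype.sum_prod_type]
    calc _ = ∑ s' : Fin M, if τ j s' = i ∧ (s' : ℕ).testBit l then (1 : ℝ) else 0 := by
          refine Finset.sum_congr rfl fun s' _ => ?_
          rw [← slab_indicator]
          simp only [Fintype.sum_bool, unit, height, t, if_true, Bool.false_eq_true, if_false]
          ring
      _ = if τ j s = i ∧ s.testBit l then (1 : ℝ) else 0 := by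
          refine Fintype.sum_eq_single (⟨s, hs⟩ : Fin M) fun s' hne => if_neg fun h => hne ?_
          exact Fin.ext (hτ_inj j s' s'.2 s hs (h.1.trans hsi.symm))
      _ = _ := by simp [hsi, hbit]
  simp only [hsum]
  split_ifs <;> first | rfl | linarith

/-- For `d > 3` and `1 ≤ k ≤ 2^(d/2 - 2)`, the VC-dimension of
`bin(lin_k(𝒯))` is at least `(dk/8)·log₂(k/4)`: there are `m` points shattered
by `bin(lin_k(𝒯))` with `m ≥ (dk/8)·log₂(k/4)`. -/
theorem vc_lower_bound_lin_threshold (d k : ℕ) (hd : 3 < d) (hk : 1 ≤ k)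
    (hk2 : (k : ℝ) ≤ (2 : ℝ) ^ ((d : ℝ) / 2 - 2)) :
    ∃ m : ℕ, ((d : ℝ) * k / 8) * Real.logb 2 ((k : ℝ) / 4) ≤ (m : ℝ) ∧
      Shatters (binOf (linComb (LTF d) k)) m := by
  obtain ⟨R, g, hdim, hRg, hR⟩ : ∃ R g : ℕ, 1 + R + g = d ∧ 1 + R ≤ g ∧ d ≤ 2 * R + 3 :=
    ⟨d / 2 - 1, d - d / 2, by omega, by omega, by omega⟩
  have hM : k / 2 ≤ 2 ^ R := by
    have hR' : (d : ℝ) ≤ 2 * R + 3 := by exact_mod_cast hR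
    have h : (k : ℝ) ≤ (2 : ℝ) ^ (R : ℝ) :=
      hk2.trans (Real.rpow_le_rpow_of_exponent_le (by norm_num) (by linarith))
    rw [Real.rpow_natCast] at h
    exact (Nat.div_le_self k 2).trans (by exact_mod_cast h)
  refine ⟨g * digitTotal (k / 2), ?_, ?_⟩
  · have hg : (d : ℝ) / 2 ≤ g := by
      have : (d : ℝ) ≤ 2 * g := by exact_mod_cast (by omega : d ≤ 2 * g)
      linarith
    calc (d : ℝ) * k / 8 * Real.logb 2 ((k : ℝ) / 4)
        = d / 2 * (k / 4 * Real.logb 2 ((k : ℝ) / 4)) := by ring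
      _ ≤ d / 2 * digitTotal (k / 2) := by
          gcongr
          exact mul_logb_le_digitTotal k hk
      _ ≤ g * digitTotal (k / 2) := by gcongr
      _ = ((g * digitTotal (k / 2) : ℕ) : ℝ) := by push_cast; ring
  · have h := shatters_linComb_LTF R g (k / 2) k hM (by omega)
    rwa [hdim] at h
end

section
/- Let d ≥ 2 and k ≥ 1. There exist points x_1,…,x_k ∈ ℝ^d that are shattered by bin(conv_{k+1}(𝒯)), the thresholded convex combinations of k+1 linear threshold functions on ℝ^d: for every labeling b ∈ {0,1}^k there exists h ∈ conv_{k+1}(𝒯) with 𝟙[h(x_i) ≥ 1/(k+1)] = b_i for all i = 1,…,k. Consequently, d_VC(bin(conv_{k+1}(𝒯))) ≥ k, the pseudodimension of conv_{k+1}(𝒯) is at least k, and the pseudodimension of conv(𝒯) = ∪_{k≥1} conv_k(𝒯) is infinite. -/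
/-- `conv_k(𝒢)`: convex combinations of `k` functions from `G`. -/
def convComb {α : Type*} (G : Set (α → ℝ)) (k : ℕ) : Set (α → ℝ) :=
  {f | ∃ (a : Fin k → ℝ) (g : Fin k → α → ℝ), (∀ i, 0 ≤ a i) ∧ (∑ i, a i = 1) ∧
    (∀ i, g i ∈ G) ∧ f = fun x => ∑ i, a i * g i x}

/-- `conv(𝒢) = ∪_{k ≥ 1} conv_k(𝒢)`: the convex hull of `G`. -/
def convHullFn {α : Type*} (G : Set (α → ℝ)) : Set (α → ℝ) :=
  {f | ∃ k, 1 ≤ k ∧ f ∈ convComb G k}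

/-- Pseudo-shattering of `m` points by a real-valued class; `d_P(F) ≥ m` iff
`PseudoShatters F m`. -/
def PseudoShatters {α : Type*} (F : Set (α → ℝ)) (m : ℕ) : Prop :=
  ∃ (x : Fin m → α) (t : Fin m → ℝ), ∀ b : Fin m → Bool, ∃ f ∈ F,
    ∀ i, (t i ≤ f (x i) ↔ b i = true)

/-- The half-space cut out by the tangent to the parabola at `(c, c²)`, shifted by `s`. -/
theorem exists_mem_LTF_parabola (n : ℕ) (c s : ℝ) :
    ∃ g ∈ LTF (n + 2), ∀ u : ℝ,
      g (Fin.cons u (Fin.cons (u ^ 2) 0)) = if (u - c) ^ 2 ≤ s then 1 else 0 := by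
  refine ⟨_, ⟨Fin.cons (2 * c) (Fin.cons (-1) 0), c ^ 2 - s, rfl⟩, fun u => ?_⟩
  have h : (∑ j, (Fin.cons (2 * c) (Fin.cons (-1) 0) : Fin (n + 2) → ℝ) j *
      (Fin.cons u (Fin.cons (u ^ 2) 0) : Fin (n + 2) → ℝ) j) = 2 * c * u - u ^ 2 := by
    simp [Fin.sum_univ_succ, sub_eq_add_neg]
  simp only [h]
  congr 1
  apply propext
  constructor <;> intro h <;> nlinarith

/-- Points on a parabola are shattered, at threshold `1 / (k + 1)`, by uniform averages of
`k + 1` linear threshold functions. -/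
theorem exists_convComb_LTF_threshold (d k : ℕ) (hd : 2 ≤ d) :
    ∃ x : Fin k → (Fin d → ℝ), ∀ b : Fin k → Bool,
      ∃ h ∈ convComb (LTF d) (k + 1),
        ∀ i, (1 / ((k : ℝ) + 1) ≤ h (x i) ↔ b i = true) := by
  obtain ⟨n, rfl⟩ := Nat.exists_eq_add_of_le' hd
  refine ⟨fun i => Fin.cons (i : ℝ) (Fin.cons ((i : ℝ) ^ 2) 0), fun b => ?_⟩
  let s : Fin (k + 1) → ℝ := Fin.snoc (fun i => if b i then 0 else -1) (-1)
  choose g hg hgx using fun j : Fin (k + 1) => exists_mem_LTF_parabola n (j : ℝ) (s j)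
  have hk : (0 : ℝ) < (k : ℝ) + 1 := by positivity
  refine ⟨_, ⟨fun _ => 1 / ((k : ℝ) + 1), g, fun _ => by positivity, ?_, hg, rfl⟩, fun i => ?_⟩
  · simp [hk.ne']
  have hsum : ∑ j, g j (Fin.cons (i : ℝ) (Fin.cons ((i : ℝ) ^ 2) 0)) =
      if b i then 1 else 0 := by
    have hneg (u : ℝ) : ¬ u ^ 2 ≤ -1 := by nlinarith [sq_nonneg u]
    have hterm (j : Fin k) : (if ((i : ℝ) - (j : ℝ)) ^ 2 ≤ (if b j then 0 else -1) then
        (1 : ℝ) else 0) = if i = j then (if b j then 1 else 0) else 0 := by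
      have hsq : ((i : ℝ) - (j : ℝ)) ^ 2 ≤ 0 ↔ i = j := by
        rw [sq_nonpos_iff, sub_eq_zero, Nat.cast_inj, Fin.val_inj]
      cases b j <;> simp [hneg, hsq]
    simp only [hgx, Fin.sum_univ_castSucc, s, Fin.snoc_castSucc, Fin.snoc_last,
      Fin.val_castSucc, hterm, hneg]
    simp
  simp only [← Finset.mul_sum, hsum]
  cases b i <;> simp [hk]

/-- For `d ≥ 2`, `k ≥ 1`: there are `k` points in `ℝ^d` such that for every
labeling `b ∈ {0,1}^k` some `h ∈ conv_{k+1}(𝒯)` satisfies `𝟙[h(x_i) ≥ 1/(k+1)] = b_i`.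
Consequently `d_VC(bin(conv_{k+1}(𝒯))) ≥ k`, `d_P(conv_{k+1}(𝒯)) ≥ k`, and the
pseudodimension of `conv(𝒯)` is infinite. -/
theorem conv_hull_shatters (d k : ℕ) (hd : 2 ≤ d) (hk : 1 ≤ k) :
    (∃ x : Fin k → (Fin d → ℝ), ∀ b : Fin k → Bool,
      ∃ h ∈ convComb (LTF d) (k + 1),
        ∀ i, (if h (x i) ≥ 1 / ((k : ℝ) + 1) then (1 : ℝ) else 0)
              = if b i then (1 : ℝ) else 0) ∧
    Shatters (binOf (convComb (LTF d) (k + 1))) k ∧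
    PseudoShatters (convComb (LTF d) (k + 1)) k ∧
    ∀ m : ℕ, PseudoShatters (convHullFn (LTF d)) m := by
  obtain ⟨x, hx⟩ := exists_convComb_LTF_threshold d k hd
  refine ⟨⟨x, fun b => ?_⟩, ⟨x, fun b => ?_⟩, ⟨x, fun _ => 1 / ((k : ℝ) + 1), hx⟩, fun m => ?_⟩
  · obtain ⟨h, hh, hb⟩ := hx b
    exact ⟨h, hh, fun i => by simp only [ge_iff_le, hb]⟩
  · obtain ⟨h, hh, hb⟩ := hx b
    exact ⟨_, ⟨h, hh, 1 / ((k : ℝ) + 1), rfl⟩, fun i => by simp only [ge_iff_le, hb]⟩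
  · obtain ⟨y, hy⟩ := exists_convComb_LTF_threshold d m hd
    refine ⟨y, fun _ => 1 / ((m : ℝ) + 1), fun b => ?_⟩
    obtain ⟨h, hh, hb⟩ := hy b
    exact ⟨h, ⟨m + 1, Nat.le_add_left 1 m, hh⟩, hb⟩
end

section
/- Let φ : ℝ → ℝ be c_φ-Lipschitz with φ(0) = 0, let B > 0, let f* : 𝒳 → [−B,B] be a fixed function, and for f ∈ conv(𝒢) define the regret r_f(x,y) = φ(f(x) − y) − φ(f*(x) − y) on 𝒳 × 𝒴 with 𝒴 ⊆ [−B,B]. Then for every n and every fixed sample (x_1,y_1),…,(x_n,y_n) ∈ 𝒳 × 𝒴: E_ε [ sup_{f ∈ conv(𝒢)} (1/n) Σ_{i=1}^n ε_i r_f(x_i, y_i) ] ≤ 2 c_φ · E_ε [ sup_{f ∈ conv(𝒢)} (1/n) Σ_{i=1}^n ε_i f(x_i) ] + 4 c_φ B / √n, where ε = (ε_1,…,ε_n) are independent Rademacher random variables (each equal to −1 or +1 with probability 1/2) and E_ε denotes expectation over ε. -/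
/-- Every function in the convex hull of a class bounded by `B` is bounded by `B`. -/
lemma abs_le_of_mem_convHullFn {α : Type*} {G : Set (α → ℝ)} {B : ℝ}
    (hG : ∀ g ∈ G, ∀ x, g x ∈ Set.Icc (-B) B) {f : α → ℝ} (hf : f ∈ convHullFn G) (x : α) :
    |f x| ≤ B := by
  obtain ⟨k, -, a, g, ha, hsum, hg, rfl⟩ := hf
  calc |∑ i, a i * g i x| ≤ ∑ i, |a i * g i x| := Finset.abs_sum_le_sum_abs _ _
    _ ≤ ∑ i, a i * B := by
        refine Finset.sum_le_sum fun i _ => ?_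
        rw [abs_mul, abs_of_nonneg (ha i)]
        exact mul_le_mul_of_nonneg_left (abs_le.2 (hG _ (hg i) x)) (ha i)
    _ = B := by rw [← Finset.sum_mul, hsum, one_mul]

lemma subset_convHullFn {α : Type*} (G : Set (α → ℝ)) : G ⊆ convHullFn G := fun g hg =>
  ⟨1, le_rfl, fun _ => 1, fun _ => g, by simp, by simp, fun _ => hg, by simp⟩

/-- The one-sign case of the contraction principle. -/
lemma iSup_add_iSup_sub_le_of_contraction {ι : Type*} [Nonempty ι] {h u v : ι → ℝ}
    (huv : ∀ f g, |v f - v g| ≤ |u f - u g|)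
    (hadd : BddAbove (Set.range fun f => h f + u f))
    (hsub : BddAbove (Set.range fun f => h f - u f)) :
    (⨆ f, (h f + v f)) + ⨆ f, (h f - v f) ≤ (⨆ f, (h f + u f)) + ⨆ f, (h f - u f) := by
  have key : ∀ f g, (h f + v f) + (h g - v g) ≤ (⨆ f, (h f + u f)) + ⨆ f, (h f - u f) := by
    intro f g
    have hfg := (le_abs_self _).trans (huv f g)
    have h₁ := le_ciSup hadd f
    have h₂ := le_ciSup hadd g
    have h₃ := le_ciSup hsub f
    have h₄ := le_ciSup hsub g
    rcases abs_cases (u f - u g) with ⟨he, -⟩ | ⟨he, -⟩ <;> linarith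
  rw [← le_sub_iff_add_le]
  refine ciSup_le fun f => ?_
  rw [le_sub_iff_add_le, ← le_sub_iff_add_le']
  refine ciSup_le fun g => ?_
  rw [le_sub_iff_add_le']
  exact key f g

/-- A bounded offset plus a signed sum of bounded functions is bounded above. -/
lemma bddAbove_range_add_sum_sign {ι : Type*} {n : ℕ} {h : ι → ℝ} {u : ι → Fin n → ℝ} {C D : ℝ}
    (hh : ∀ f, |h f| ≤ C) (hu : ∀ f i, |u f i| ≤ D) (ε : Fin n → Bool) :
    BddAbove (Set.range fun f => h f + ∑ i, (if ε i then (1 : ℝ) else -1) * u f i) := by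
  refine ⟨C + ∑ _i : Fin n, D, ?_⟩
  rintro _ ⟨f, rfl⟩
  refine add_le_add ((le_abs_self _).trans (hh f)) (Finset.sum_le_sum fun i _ => ?_)
  have := abs_le.1 (hu f i)
  split_ifs <;> linarith

lemma sum_fin_succ_bool {n : ℕ} (F : (Fin (n + 1) → Bool) → ℝ) :
    ∑ ε, F ε = ∑ ε : Fin n → Bool, (F (Fin.cons true ε) + F (Fin.cons false ε)) := by
  rw [← (Fin.consEquiv fun _ => Bool).sum_comp, Fintype.sum_prod_type, Fintype.sum_bool,
    ← Finset.sum_add_distrib]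
  rfl

/-- The contraction principle for Rademacher sums with a bounded offset `h`. -/
theorem sum_iSup_sign_le_of_contraction {ι : Type*} [Nonempty ι] {n : ℕ} {C D : ℝ}
    {h : ι → ℝ} {u v : ι → Fin n → ℝ}
    (hh : ∀ f, |h f| ≤ C) (hu : ∀ f i, |u f i| ≤ D) (hv : ∀ f i, |v f i| ≤ D)
    (huv : ∀ f g i, |v f i - v g i| ≤ |u f i - u g i|) :
    ∑ ε : Fin n → Bool, ⨆ f, (h f + ∑ i, (if ε i then (1 : ℝ) else -1) * v f i) ≤
      ∑ ε : Fin n → Bool, ⨆ f, (h f + ∑ i, (if ε i then (1 : ℝ) else -1) * u f i) := by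
  induction n generalizing h C with
  | zero => simp
  | succ n ih =>
    have hadd : ∀ w : ι → Fin (n + 1) → ℝ, (∀ f i, |w f i| ≤ D) →
        ∀ f, |h f + w f 0| ≤ C + D := fun w hw f =>
      (abs_add_le _ _).trans (add_le_add (hh f) (hw f 0))
    have hsub : ∀ w : ι → Fin (n + 1) → ℝ, (∀ f i, |w f i| ≤ D) →
        ∀ f, |h f - w f 0| ≤ C + D := fun w hw f =>
      (abs_sub _ _).trans (add_le_add (hh f) (hw f 0))
    have split : ∀ w : ι → Fin (n + 1) → ℝ,
        ∑ ε : Fin (n + 1) → Bool, ⨆ f, (h f + ∑ i, (if ε i then (1 : ℝ) else -1) * w f i) =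
          ∑ ε : Fin n → Bool,
            ((⨆ f, ((h f + w f 0) + ∑ i : Fin n, (if ε i then (1 : ℝ) else -1) * w f i.succ)) +
              ⨆ f, ((h f - w f 0) +
                ∑ i : Fin n, (if ε i then (1 : ℝ) else -1) * w f i.succ)) := by
      intro w
      rw [sum_fin_succ_bool]
      simp [Fin.sum_univ_succ, add_assoc, sub_eq_add_neg]
    rw [split, split, Finset.sum_add_distrib]
    refine (add_le_add
      (ih (u := fun f i => u f i.succ) (hadd v hv) (fun f i => hu f _) (fun f i => hv f _)
        fun f g i => huv f g _)
      (ih (u := fun f i => u f i.succ) (hsub v hv) (fun f i => hu f _) (fun f i => hv f _)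
        fun f g i => huv f g _)).trans ?_
    rw [← Finset.sum_add_distrib]
    refine Finset.sum_le_sum fun ε _ => ?_
    have ba := bddAbove_range_add_sum_sign (hadd u hu) (fun f i => hu f (Fin.succ i)) ε
    have bs := bddAbove_range_add_sum_sign (hsub u hu) (fun f i => hu f (Fin.succ i)) ε
    have comm : ∀ w : ι → Fin (n + 1) → ℝ,
        (fun f => h f + w f 0 + ∑ i : Fin n, (if ε i then (1 : ℝ) else -1) * u f i.succ) =
          fun f => h f + ∑ i : Fin n, (if ε i then (1 : ℝ) else -1) * u f i.succ + w f 0 :=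
      fun w => funext fun f => add_right_comm _ _ _
    simp only [sub_add_eq_add_sub] at bs ⊢
    rw [comm] at ba
    rw [comm, comm]
    exact iSup_add_iSup_sub_le_of_contraction (fun f g => huv f g 0) ba bs

/-- Rademacher contraction-type bound for the regret class
`r_f(x,y) = φ(f(x) - y) - φ(f*(x) - y)`: the empirical Rademacher complexity of
the regret class is at most `2 c_φ` times the empirical Rademacher complexity of
`conv(𝒢)` plus `4 c_φ B / √n`.  The expectation over the Rademacher vector
`ε ∈ {-1,1}^n` is written as the average over all `2^n` sign patterns. -/
theorem rademacher_regret_contraction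
    (d : ℕ) (X : Set (Fin d → ℝ)) (B : ℝ) (hB : 0 < B)
    (Y : Set ℝ) (hY : Y ⊆ Set.Icc (-B) B)
    (G : Set (↥X → ℝ)) (hGne : G.Nonempty)
    (hGB : ∀ g ∈ G, ∀ x, g x ∈ Set.Icc (-B) B)
    (φ : ℝ → ℝ) (cφ : ℝ) (hcφ : 0 ≤ cφ)
    (hφ : ∀ u v, |φ u - φ v| ≤ cφ * |u - v|) (hφ0 : φ 0 = 0)
    (fstar : ↥X → ℝ) (hfs : ∀ x, fstar x ∈ Set.Icc (-B) B)
    (n : ℕ) (hn : 0 < n) (x : Fin n → ↥X) (y : Fin n → ℝ) (hy : ∀ i, y i ∈ Y) :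
    (1 / 2 ^ n : ℝ) * ∑ ε : Fin n → Bool,
        sSup ((fun f : ↥X → ℝ => (1 / (n : ℝ)) * ∑ i,
            (if ε i then (1 : ℝ) else -1) *
              (φ (f (x i) - y i) - φ (fstar (x i) - y i))) '' convHullFn G)
      ≤ 2 * cφ *
          ((1 / 2 ^ n : ℝ) * ∑ ε : Fin n → Bool,
            sSup ((fun f : ↥X → ℝ => (1 / (n : ℝ)) * ∑ i,
                (if ε i then (1 : ℝ) else -1) * f (x i)) '' convHullFn G))
        + 4 * cφ * B / Real.sqrt n := by
  have hne : Nonempty (convHullFn G) := (hGne.mono (subset_convHullFn G)).to_subtype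
  have hn' : (0 : ℝ) ≤ 1 / n := by positivity
  have hf : ∀ (f : convHullFn G) i, |f.1 (x i)| ≤ B := fun f i =>
    abs_le_of_mem_convHullFn hGB f.2 (x i)
  set u : convHullFn G → Fin n → ℝ := fun f i => cφ * (1 / n * f.1 (x i)) with hu_def
  set v : convHullFn G → Fin n → ℝ := fun f i =>
    1 / n * (φ (f.1 (x i) - y i) - φ (fstar (x i) - y i)) with hv_def
  have hu : ∀ f i, |u f i| ≤ cφ * (1 / n * (2 * B)) := by
    intro f i
    rw [hu_def, abs_mul, abs_mul, abs_of_nonneg hcφ, abs_of_nonneg hn']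
    gcongr
    linarith [hf f i]
  have hv : ∀ f i, |v f i| ≤ cφ * (1 / n * (2 * B)) := by
    intro f i
    rw [hv_def, abs_mul, abs_of_nonneg hn', mul_left_comm]
    refine mul_le_mul_of_nonneg_left ((hφ _ _).trans ?_) hn'
    refine mul_le_mul_of_nonneg_left ?_ hcφ
    rw [sub_sub_sub_cancel_right]
    have h₁ := abs_le.1 (hf f i)
    obtain ⟨h₂, h₃⟩ := hfs (x i)
    exact abs_le.2 ⟨by linarith, by linarith⟩
  have huv : ∀ f g i, |v f i - v g i| ≤ |u f i - u g i| := by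
    intro f g i
    simp only [hu_def, hv_def]
    rw [← mul_sub, ← mul_sub, ← mul_sub, sub_sub_sub_cancel_right, abs_mul, abs_mul, abs_mul,
      abs_of_nonneg hn', abs_of_nonneg hcφ, mul_left_comm cφ]
    refine mul_le_mul_of_nonneg_left ((hφ _ _).trans ?_) hn'
    rw [sub_sub_sub_cancel_right]
  have hcontr := sum_iSup_sign_le_of_contraction (h := fun _ => 0) (C := 0) (by simp) hu hv huv
  have hnonneg := sum_iSup_sign_le_of_contraction (h := fun _ => 0) (C := 0) (u := u)
    (v := fun _ _ => 0) (by simp) hu (fun f i => by simpa using (abs_nonneg _).trans (hu f i))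
    (fun f g i => by simp)
  simp only [zero_add, mul_zero, Finset.sum_const_zero, ciSup_const] at hcontr hnonneg
  have hL : ∀ ε : Fin n → Bool,
      sSup ((fun f : ↥X → ℝ => (1 / (n : ℝ)) * ∑ i, (if ε i then (1 : ℝ) else -1) *
        (φ (f (x i) - y i) - φ (fstar (x i) - y i))) '' convHullFn G) =
      ⨆ f, ∑ i, (if ε i then (1 : ℝ) else -1) * v f i := by
    intro ε
    rw [sSup_image']
    simp only [hv_def, Finset.mul_sum, mul_left_comm (1 / (n : ℝ))]
  have hR : ∀ ε : Fin n → Bool,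
      cφ * sSup ((fun f : ↥X → ℝ => (1 / (n : ℝ)) * ∑ i, (if ε i then (1 : ℝ) else -1) *
        f (x i)) '' convHullFn G) =
      ⨆ f, ∑ i, (if ε i then (1 : ℝ) else -1) * u f i := by
    intro ε
    rw [sSup_image', Real.mul_iSup_of_nonneg hcφ]
    refine iSup_congr fun f => ?_
    simp only [hu_def, Finset.mul_sum]
    exact Finset.sum_congr rfl fun i _ => by ring
  simp only [hL]
  rw [mul_assoc 2, mul_left_comm cφ, Finset.mul_sum _ _ cφ]
  simp only [hR]
  have h2 : (0 : ℝ) ≤ 1 / 2 ^ n := by positivity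
  have hB' : 0 ≤ 4 * cφ * B / Real.sqrt n := by positivity
  have h₁ := mul_le_mul_of_nonneg_left hcontr h2
  have h₃ := mul_nonneg h2 hnonneg
  linarith
end

section
/- Let B > 0, p ≥ 1, C ≥ 1, and let 𝒢 ⊆ [−B,B]^𝒳 be a nonempty class of functions such that for every n ≥ 1, every x = (x_1,…,x_n) ∈ 𝒳^n and every ε ∈ (0, CB], there exists a finite set S of functions 𝒳 → ℝ with |S| ≤ (CB/ε)^{2p} such that every f ∈ 𝒢 has some g ∈ S with d_x(f,g) ≤ ε, where d_x(f,g) = ((1/n) Σ_{i=1}^n (f(x_i) − g(x_i))²)^{1/2}. Then there exists a constant D > 0 depending only on C such that for every n and every x ∈ 𝒳^n: E_ε [ sup_{f ∈ 𝒢} (1/n) Σ_{i=1}^n ε_i f(x_i) ] ≤ D B √(p/n), where ε_1,…,ε_n are independent Rademacher random variables (each equal to −1 or +1 with probability 1/2). -/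
universe u

/-- The Rademacher sum `∑ i, ± v i` with signs given by `σ`. -/
def rademacherSum {ι : Type*} [Fintype ι] (σ : ι → Bool) (v : ι → ℝ) : ℝ :=
  ∑ i, (if σ i then (1 : ℝ) else -1) * v i

section Rademacher

variable {ι : Type*} [Fintype ι]

lemma rademacherSum_sub (σ : ι → Bool) (v w : ι → ℝ) :
    rademacherSum σ (fun i => v i - w i) = rademacherSum σ v - rademacherSum σ w := by
  simp only [rademacherSum, mul_sub, Finset.sum_sub_distrib]

/-- A Rademacher sum is at most the `ℓ¹` norm, hence at most `√n` times the `ℓ²` norm. -/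
lemma rademacherSum_le (σ : ι → Bool) (v : ι → ℝ) {δ : ℝ} (hδ : 0 < δ)
    (hv : ∑ i, v i ^ 2 ≤ Fintype.card ι * δ ^ 2) :
    rademacherSum σ v ≤ Fintype.card ι * δ := by
  have h : ∀ i, (if σ i then (1 : ℝ) else -1) * v i ≤ (v i ^ 2 / δ + δ) / 2 := by
    intro i
    have h1 : (v i ^ 2 / δ + δ) / 2 = (v i ^ 2 + δ ^ 2) / (2 * δ) := by
      field_simp
    rw [h1, le_div_iff₀ (by positivity)]
    split_ifs
    · nlinarith [sq_nonneg (v i - δ)]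
    · nlinarith [sq_nonneg (v i + δ)]
  calc rademacherSum σ v ≤ ∑ i, (v i ^ 2 / δ + δ) / 2 := Finset.sum_le_sum fun i _ => h i
    _ = ((∑ i, v i ^ 2) / δ + Fintype.card ι * δ) / 2 := by
      rw [← Finset.sum_div, Finset.sum_add_distrib, ← Finset.sum_div]
      simp
    _ ≤ (Fintype.card ι * δ ^ 2 / δ + Fintype.card ι * δ) / 2 := by gcongr
    _ = Fintype.card ι * δ := by field_simp; ring

variable [DecidableEq ι]

/-- The moment generating function of a Rademacher sum is sub-Gaussian. -/
lemma sum_exp_rademacherSum_le (l : ℝ) (v : ι → ℝ) :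
    ∑ σ : ι → Bool, Real.exp (l * rademacherSum σ v)
      ≤ 2 ^ Fintype.card ι * Real.exp (l ^ 2 * (∑ i, v i ^ 2) / 2) := by
  have h1 : ∑ σ : ι → Bool, Real.exp (l * rademacherSum σ v)
      = ∏ i, ∑ b : Bool, Real.exp (l * ((if b then (1 : ℝ) else -1) * v i)) := by
    rw [Finset.prod_univ_sum]
    simp only [Fintype.piFinset_univ, rademacherSum, Finset.mul_sum, Real.exp_sum]
  rw [h1]
  calc ∏ i, ∑ b : Bool, Real.exp (l * ((if b then (1 : ℝ) else -1) * v i))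
      ≤ ∏ i, 2 * Real.exp ((l * v i) ^ 2 / 2) := by
        refine Finset.prod_le_prod (fun i _ => by positivity) fun i _ => ?_
        have := Real.cosh_le_exp_half_sq (l * v i)
        rw [Real.cosh_eq] at this
        simp only [Fintype.sum_bool, if_true, Bool.false_eq_true, if_false, one_mul,
          neg_mul, mul_neg]
        linarith
    _ = 2 ^ Fintype.card ι * Real.exp (l ^ 2 * (∑ i, v i ^ 2) / 2) := by
        rw [Finset.prod_mul_distrib, ← Real.exp_sum]
        simp only [Finset.prod_const, Finset.card_univ, mul_pow, ← Finset.mul_sum,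
          ← Finset.sum_div]

lemma sum_rademacherSum_eq_zero (v : ι → ℝ) :
    ∑ σ : ι → Bool, rademacherSum σ v = 0 := by
  have h : ∑ σ : ι → Bool, rademacherSum σ v = ∑ σ : ι → Bool, -rademacherSum σ v := by
    refine Fintype.sum_equiv (Equiv.piCongrRight fun _ : ι => Equiv.boolNot) _ _ fun σ => ?_
    simp only [rademacherSum, ← Finset.sum_neg_distrib]
    refine Finset.sum_congr rfl fun i _ => ?_
    cases h : σ i <;> simp [h]
  rw [Finset.sum_neg_distrib] at h
  linarith

/-- Massart's finite class lemma, with a free parameter `l` in place of the optimal one. -/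
lemma exists_bound_rademacherSum (T : Finset (ι → ℝ)) {L W l : ℝ} (hl : 0 < l)
    (hT : (T.card : ℝ) ≤ Real.exp L) (hW : ∀ v ∈ T, ∑ i, v i ^ 2 ≤ W) :
    ∃ M : (ι → Bool) → ℝ, (∀ σ, ∀ v ∈ T, rademacherSum σ v ≤ M σ) ∧
      ∑ σ, M σ ≤ 2 ^ Fintype.card ι * ((L + l ^ 2 * W / 2) / l) := by
  set a := L + l ^ 2 * W / 2 with ha
  refine ⟨fun σ => (∑ v ∈ T, Real.exp (l * rademacherSum σ v - a) - 1 + a) / l, ?_, ?_⟩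
  · intro σ v hv
    rw [le_div_iff₀ hl]
    have h1 := Real.add_one_le_exp (l * rademacherSum σ v - a)
    have h2 : Real.exp (l * rademacherSum σ v - a)
        ≤ ∑ v ∈ T, Real.exp (l * rademacherSum σ v - a) :=
      Finset.single_le_sum (f := fun v => Real.exp (l * rademacherSum σ v - a))
        (fun _ _ => (Real.exp_pos _).le) hv
    linarith
  · have hcard : ((Finset.univ : Finset (ι → Bool)).card : ℝ) = 2 ^ Fintype.card ι := by
      simp
    have key : ∑ σ : ι → Bool, ∑ v ∈ T, Real.exp (l * rademacherSum σ v - a)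
        ≤ 2 ^ Fintype.card ι := by
      rw [Finset.sum_comm]
      calc ∑ v ∈ T, ∑ σ : ι → Bool, Real.exp (l * rademacherSum σ v - a)
          ≤ ∑ v ∈ T, 2 ^ Fintype.card ι * Real.exp (-L) := by
            refine Finset.sum_le_sum fun v hv => ?_
            have h1 := sum_exp_rademacherSum_le l v
            have h2 : Real.exp (l ^ 2 * (∑ i, v i ^ 2) / 2) ≤ Real.exp (l ^ 2 * W / 2) := by
              have := hW v hv
              gcongr
            calc ∑ σ : ι → Bool, Real.exp (l * rademacherSum σ v - a)
                = (∑ σ : ι → Bool, Real.exp (l * rademacherSum σ v)) * Real.exp (-a) := by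
                  simp only [sub_eq_add_neg, Real.exp_add, Finset.sum_mul]
              _ ≤ (2 ^ Fintype.card ι * Real.exp (l ^ 2 * W / 2)) * Real.exp (-a) := by
                  gcongr
                  exact h1.trans (by gcongr)
              _ = 2 ^ Fintype.card ι * Real.exp (-L) := by
                  rw [mul_assoc, ← Real.exp_add, ha]
                  congr 2
                  ring
        _ = 2 ^ Fintype.card ι * (T.card * Real.exp (-L)) := by
            rw [Finset.sum_const, nsmul_eq_mul]; ring
        _ ≤ 2 ^ Fintype.card ι * (Real.exp L * Real.exp (-L)) := by gcongr
        _ = 2 ^ Fintype.card ι := by rw [← Real.exp_add]; simp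
    rw [← Finset.sum_div, Finset.sum_add_distrib, Finset.sum_sub_distrib, Finset.sum_const,
      Finset.sum_const, nsmul_eq_mul, nsmul_eq_mul, hcard, ← mul_div_assoc]
    gcongr
    linarith

/-- Chaining along dyadic nets `S k` of radius `r / 2 ^ k` and cardinality at most
`exp (2 k q²)`. -/
lemma exists_chaining_bound {V : Set (ι → ℝ)} {S : ℕ → Finset (ι → ℝ)} {q r : ℝ}
    (hq : 0 < q) (hr : 0 < r) (hS : ∀ k : ℕ, ((S k).card : ℝ) ≤ Real.exp (2 * k * q ^ 2))
    (hcover : ∀ k, ∀ f ∈ V, ∃ g ∈ S k, ∑ i, (f i - g i) ^ 2 ≤ (r / 2 ^ k) ^ 2) (K : ℕ) :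
    ∃ M : (ι → Bool) → ℝ,
      (∀ σ, ∀ f ∈ V, ∀ g ∈ S K, ∑ i, (f i - g i) ^ 2 ≤ (r / 2 ^ K) ^ 2 →
        rademacherSum σ g ≤ M σ) ∧
      ∑ σ, M σ ≤ 2 ^ Fintype.card ι * (q * r * (13 - (4 * K + 13) / 2 ^ K)) := by
  induction K with
  | zero =>
    have h0 : (S 0).card ≤ 1 := by
      have := hS 0
      simp only [Nat.cast_zero, mul_zero, zero_mul, Real.exp_zero] at this
      exact_mod_cast this
    rcases (S 0).eq_empty_or_nonempty with he | ⟨g₀, hg₀⟩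
    · exact ⟨fun _ => 0, by simp [he], by simp⟩
    · refine ⟨fun σ => rademacherSum σ g₀, ?_, ?_⟩
      · intro σ f _ g hg _
        rw [Finset.card_le_one.mp h0 g hg g₀ hg₀]
      · rw [sum_rademacherSum_eq_zero]
        simp
  | succ k ih =>
    obtain ⟨M, hM, hMsum⟩ := ih
    classical
    set T : Finset (ι → ℝ) := ((S k ×ˢ S (k + 1)).image fun w i => w.2 i - w.1 i).filter
      fun v => ∑ i, v i ^ 2 ≤ 10 * (r / 2 ^ (k + 1)) ^ 2 with hTdef
    have hTcard : (T.card : ℝ) ≤ Real.exp (4 * (k + 1) * q ^ 2) := by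
      have h1 : T.card ≤ (S k).card * (S (k + 1)).card := by
        rw [← Finset.card_product]
        exact (Finset.card_filter_le _ _).trans Finset.card_image_le
      calc (T.card : ℝ) ≤ (S k).card * (S (k + 1)).card := by exact_mod_cast h1
        _ ≤ Real.exp (2 * k * q ^ 2) * Real.exp (2 * (k + 1 : ℕ) * q ^ 2) :=
          mul_le_mul (hS _) (hS _) (by positivity) (by positivity)
        _ ≤ Real.exp (4 * (k + 1) * q ^ 2) := by
          rw [← Real.exp_add, Real.exp_le_exp]
          push_cast
          nlinarith [sq_nonneg q]
    obtain ⟨M', hM', hMsum'⟩ := exists_bound_rademacherSum T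
      (l := q * 2 ^ (k + 1) / r) (W := 10 * (r / 2 ^ (k + 1)) ^ 2) (by positivity) hTcard
      (fun v hv => (Finset.mem_filter.mp hv).2)
    refine ⟨fun σ => M σ + M' σ, ?_, ?_⟩
    · intro σ f hf g hg hfg
      obtain ⟨g', hg', hfg'⟩ := hcover k f hf
      have hmem : (fun i => g i - g' i) ∈ T := by
        refine Finset.mem_filter.mpr
          ⟨Finset.mem_image.mpr ⟨(g', g), Finset.mem_product.mpr ⟨hg', hg⟩, rfl⟩, ?_⟩
        calc ∑ i, (g i - g' i) ^ 2
            ≤ ∑ i, (2 * (f i - g' i) ^ 2 + 2 * (f i - g i) ^ 2) :=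
              Finset.sum_le_sum fun i _ => by nlinarith [sq_nonneg (2 * f i - g i - g' i)]
          _ = 2 * ∑ i, (f i - g' i) ^ 2 + 2 * ∑ i, (f i - g i) ^ 2 := by
              rw [Finset.sum_add_distrib, Finset.mul_sum, Finset.mul_sum]
          _ ≤ 2 * (r / 2 ^ k) ^ 2 + 2 * (r / 2 ^ (k + 1)) ^ 2 := by gcongr
          _ = 10 * (r / 2 ^ (k + 1)) ^ 2 := by rw [pow_succ]; field_simp; ring
      have h1 := hM' σ _ hmem
      rw [rademacherSum_sub] at h1
      have h2 := hM σ f hf g' hg' hfg'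
      simp only
      linarith
    · rw [Finset.sum_add_distrib]
      refine (add_le_add hMsum hMsum').trans_eq ?_
      rw [← mul_add]
      congr 1
      push_cast
      rw [pow_succ]
      field_simp
      ring

end Rademacher

/-- Dudley-type bound: if a uniformly `B`-bounded class `𝒢` admits empirical
`L₂` covering numbers `N(ε, 𝒢, d_x) ≤ (CB/ε)^{2p}` for all `ε ∈ (0, CB]`, then
there is a constant `D > 0` depending only on `C` such that the empirical
Rademacher complexity of `𝒢` on any `n` points is at most `D B √(p/n)`.  The
expectation over the Rademacher vector `ε ∈ {-1,1}^n` is written as the average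
over all `2^n` sign patterns. -/
theorem dudley_rademacher_bound :
    ∀ C : ℝ, 1 ≤ C →
    ∃ D : ℝ, 0 < D ∧
      ∀ (α : Type u) (B : ℝ), 0 < B → ∀ p : ℝ, 1 ≤ p →
      ∀ G : Set (α → ℝ), G.Nonempty → (∀ f ∈ G, ∀ x, |f x| ≤ B) →
        -- covering-number assumption
        (∀ n : ℕ, 0 < n → ∀ x : Fin n → α, ∀ ε : ℝ, 0 < ε → ε ≤ C * B →
          ∃ S : Finset (α → ℝ), (S.card : ℝ) ≤ (C * B / ε) ^ (2 * p) ∧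
            ∀ f ∈ G, ∃ g ∈ S,
              Real.sqrt ((1 / (n : ℝ)) * ∑ i, (f (x i) - g (x i)) ^ 2) ≤ ε) →
        ∀ n : ℕ, 0 < n → ∀ x : Fin n → α,
          (1 / 2 ^ n : ℝ) * ∑ ε : Fin n → Bool,
              sSup ((fun f : α → ℝ => (1 / (n : ℝ)) * ∑ i,
                  (if ε i then (1 : ℝ) else -1) * f (x i)) '' G)
            ≤ D * B * Real.sqrt (p / n) := by
  intro C hC
  refine ⟨14 * C, by positivity, ?_⟩
  intro α B hB p hp G hG _ hcov n hn x
  have hn1 : (1 : ℝ) ≤ n := by exact_mod_cast hn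
  have hn0 : (0 : ℝ) < n := by linarith
  have hCB : 0 < C * B := by positivity
  choose S hScard hScov using fun k : ℕ => hcov n hn x (C * B / 2 ^ k) (by positivity)
    (div_le_self hCB.le (one_le_pow₀ (by norm_num)))
  classical
  set q := Real.sqrt p with hq
  set s := Real.sqrt n with hs
  have hq1 : 1 ≤ q := Real.one_le_sqrt.mpr hp
  have hs1 : 1 ≤ s := Real.one_le_sqrt.mpr hn1
  have hq2 : q ^ 2 = p := Real.sq_sqrt (by linarith)
  have hs2 : s ^ 2 = n := Real.sq_sqrt hn0.le
  have hnet : ∀ k : ℕ, (((S k).image fun g i => g (x i)).card : ℝ)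
      ≤ Real.exp (2 * k * q ^ 2) := by
    intro k
    have h1 : C * B / (C * B / 2 ^ k) = (2 : ℝ) ^ k := by field_simp
    calc (((S k).image fun g i => g (x i)).card : ℝ) ≤ (S k).card := by
          exact_mod_cast Finset.card_image_le
      _ ≤ ((2 : ℝ) ^ k) ^ (2 * p) := h1 ▸ hScard k
      _ ≤ (Real.exp k) ^ (2 * p) := by
          have h2 : (2 : ℝ) ^ k ≤ Real.exp k := by
            rw [← Real.exp_one_pow]
            gcongr
            linarith [Real.add_one_le_exp (1 : ℝ)]
          exact Real.rpow_le_rpow (by positivity) h2 (by linarith)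
      _ = Real.exp (2 * k * q ^ 2) := by
          rw [← Real.exp_mul, hq2]
          ring_nf
  have hcover : ∀ k, ∀ v ∈ (fun (f : α → ℝ) i => f (x i)) '' G,
      ∃ w ∈ (S k).image fun g i => g (x i),
        ∑ i, (v i - w i) ^ 2 ≤ (C * B * s / 2 ^ k) ^ 2 := by
    rintro k _ ⟨f, hf, rfl⟩
    obtain ⟨g, hg, hfg⟩ := hScov k f hf
    refine ⟨_, Finset.mem_image_of_mem _ hg, ?_⟩
    rw [Real.sqrt_le_left (by positivity), one_div, inv_mul_le_iff₀ hn0] at hfg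
    refine hfg.trans_eq ?_
    rw [← hs2]
    ring
  obtain ⟨M, hM, hMsum⟩ := exists_chaining_bound (by linarith) (by positivity) hnet hcover n
  have hpt : ∀ σ : Fin n → Bool, sSup ((fun f : α → ℝ => (1 / (n : ℝ)) * ∑ i,
      (if σ i then (1 : ℝ) else -1) * f (x i)) '' G)
      ≤ (1 / (n : ℝ)) * (M σ + n * (C * B / 2 ^ n)) := by
    intro σ
    refine csSup_le (hG.image _) ?_
    rintro _ ⟨f, hf, rfl⟩
    obtain ⟨w, hw, hfw⟩ := hcover n _ ⟨f, hf, rfl⟩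
    have h1 := hM σ _ ⟨f, hf, rfl⟩ w hw hfw
    have h2 := rademacherSum_le σ (fun i => f (x i) - w i) (δ := C * B / 2 ^ n)
      (by positivity) (hfw.trans_eq (by rw [Fintype.card_fin, ← hs2]; ring))
    rw [rademacherSum_sub, Fintype.card_fin] at h2
    have h3 : ∑ i, (if σ i then (1 : ℝ) else -1) * f (x i)
      = rademacherSum σ fun i => f (x i) := rfl
    simp only
    rw [h3]
    gcongr
    linarith
  have hrem : (n : ℝ) * (C * B / 2 ^ n) ≤ q * (C * B * s) := by
    have h1 : (n : ℝ) ≤ 2 ^ n := by exact_mod_cast Nat.lt_two_pow_self.le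
    calc (n : ℝ) * (C * B / 2 ^ n) = C * B * (n / 2 ^ n) := by ring
      _ ≤ C * B * 1 := by
          gcongr
          exact div_le_one_of_le₀ h1 (by positivity)
      _ ≤ C * B * (q * s) := by
          gcongr
          exact one_le_mul_of_one_le_of_one_le hq1 hs1
      _ = q * (C * B * s) := by ring
  have hmain : ∑ σ, M σ ≤ 2 ^ n * (13 * (q * (C * B * s))) := by
    rw [Fintype.card_fin] at hMsum
    refine hMsum.trans ?_
    have h1 : (0 : ℝ) ≤ (4 * n + 13) / 2 ^ n := by positivity
    rw [mul_comm (13 : ℝ)]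
    gcongr
    linarith
  calc (1 / 2 ^ n : ℝ) * ∑ σ : Fin n → Bool, sSup ((fun f : α → ℝ => (1 / (n : ℝ)) * ∑ i,
        (if σ i then (1 : ℝ) else -1) * f (x i)) '' G)
      ≤ (1 / 2 ^ n : ℝ) * ∑ σ, (1 / (n : ℝ)) * (M σ + n * (C * B / 2 ^ n)) := by
        gcongr with σ
        exact hpt σ
    _ = (1 / 2 ^ n : ℝ) * ((1 / (n : ℝ)) * (∑ σ, M σ + 2 ^ n * (n * (C * B / 2 ^ n)))) := by
        rw [← Finset.mul_sum, Finset.sum_add_distrib, Finset.sum_const, nsmul_eq_mul]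
        simp
    _ ≤ (1 / 2 ^ n : ℝ) * ((1 / (n : ℝ)) * (2 ^ n * (13 * (q * (C * B * s)))
          + 2 ^ n * (q * (C * B * s)))) := by gcongr
    _ = 14 * C * B * Real.sqrt (p / n) := by
        rw [Real.sqrt_div (by linarith), ← hq, ← hs, ← hs2]
        field_simp
        ring
end
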